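/- In the canonical lift, the p-torsion subgroup of Ẽ(K[ε]) equals the direct sum E[p] ⊕ Θ; in particular, since E is ordinary, Ẽ(K[ε])[p] ≅ ℤ/pℤ × K⁺. -/

import Mathlib

noncomputable section
open scoped Classical

/-- The inclusion `K → K[ε]` of the base ring into the dual numbers. -/
abbrev ιD {K : Type*} [CommRing K] (a : K) : DualNumber K := TrivSqZeroExt.inl a

/-- The element `ε` of the dual numbers `K[ε]`. -/
abbrev εD (K : Type*) [CommRing K] : DualNumber K := DualNumber.eps

/-- A projective coordinate triple `(X, Y, Z)`. -/
abbrev Pt (R : Type*) := R × R × R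

/-- The projective Weierstrass equation `Y²Z = X³ + A·XZ² + B·Z³` for the curve
`y² = x³ + Ax + B`. -/
def OnCurve {R : Type*} [CommRing R] (A B : R) (P : Pt R) : Prop :=
  P.2.1 ^ 2 * P.2.2 = P.1 ^ 3 + A * P.1 * P.2.2 ^ 2 + B * P.2.2 ^ 3

/-- The standard projective addition law on the Weierstrass curve
`y² = x³ + Ax + B`, written via the complete addition formulas
(valid over any commutative ring, agreeing with the usual chord–tangent law). -/
def padd {R : Type*} [CommRing R] (A B : R) (P Q : Pt R) : Pt R :=
  let X1 := P.1; let Y1 := P.2.1; let Z1 := P.2.2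
  let X2 := Q.1; let Y2 := Q.2.1; let Z2 := Q.2.2
  let b3 := 3 * B
  ((X1 * Y2 + X2 * Y1) * (Y1 * Y2 - A * (X1 * Z2 + X2 * Z1) - b3 * Z1 * Z2)
      - (Y1 * Z2 + Y2 * Z1) * (A * X1 * X2 + b3 * (X1 * Z2 + X2 * Z1) - A ^ 2 * Z1 * Z2),
    (3 * X1 * X2 + A * Z1 * Z2) * (A * X1 * X2 + b3 * (X1 * Z2 + X2 * Z1) - A ^ 2 * Z1 * Z2)
      + (Y1 * Y2 + A * (X1 * Z2 + X2 * Z1) + b3 * Z1 * Z2)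
        * (Y1 * Y2 - A * (X1 * Z2 + X2 * Z1) - b3 * Z1 * Z2),
    (Y1 * Z2 + Y2 * Z1) * (Y1 * Y2 + A * (X1 * Z2 + X2 * Z1) + b3 * Z1 * Z2)
      + (X1 * Y2 + X2 * Y1) * (3 * X1 * X2 + A * Z1 * Z2))

/-- The `n`-fold sum `n • P` on the curve, starting from the identity `(0 : 1 : 0)`. -/
def pmul {R : Type*} [CommRing R] (A B : R) (n : ℕ) (P : Pt R) : Pt R :=
  (fun Q => padd A B Q P)^[n] (0, 1, 0)

/-- Equality of projective points: the coordinates agree up to a unit scalar. -/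
def ProjEq {R : Type*} [CommRing R] (P Q : Pt R) : Prop :=
  ∃ u : Rˣ, Q = ((u : R) * P.1, (u : R) * P.2.1, (u : R) * P.2.2)

/-- The point at infinity `O_k = (kε : 1 : 0)` of the lift of the curve to `K[ε]`. -/
def Oinf {K : Type*} [CommRing K] (k : K) : Pt (DualNumber K) :=
  (ιD k * εD K, 1, 0)

namespace ProjEq

variable {R : Type*} [CommRing R] {P Q S : Pt R}

protected lemma refl (P : Pt R) : ProjEq P P := ⟨1, by simp⟩

protected lemma symm (h : ProjEq P Q) : ProjEq Q P := by
  obtain ⟨u, rfl⟩ := h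
  exact ⟨u⁻¹, by simp⟩

protected lemma trans (h : ProjEq P Q) (h' : ProjEq Q S) : ProjEq P S := by
  obtain ⟨u, rfl⟩ := h
  obtain ⟨v, rfl⟩ := h'
  exact ⟨v * u, by simp [mul_assoc]⟩

lemma onCurve {A B : R} (h : ProjEq P Q) (hP : OnCurve A B P) : OnCurve A B Q := by
  obtain ⟨u, rfl⟩ := h
  simp only [OnCurve] at *
  linear_combination (u : R) ^ 3 * hP

lemma padd {A B : R} {P' Q' : Pt R} (hP : ProjEq P P') (hQ : ProjEq Q Q') :
    ProjEq (padd A B P Q) (padd A B P' Q') := by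
  obtain ⟨u, rfl⟩ := hP
  obtain ⟨v, rfl⟩ := hQ
  refine ⟨u ^ 2 * v ^ 2, ?_⟩
  simp only [_root_.padd, Units.val_mul, Units.val_pow_eq_pow_val, Prod.mk.injEq]
  refine ⟨?_, ?_, ?_⟩ <;> ring

/-- Points with invertible `Y`-coordinates are equal once their cross products vanish. -/
lemma of_isUnit (hP : IsUnit P.2.1) (hQ : IsUnit Q.2.1)
    (hX : Q.1 * P.2.1 = P.1 * Q.2.1) (hZ : Q.2.2 * P.2.1 = P.2.2 * Q.2.1) : ProjEq P Q := by
  obtain ⟨a, ha⟩ := hP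
  obtain ⟨b, hb⟩ := hQ
  have hinv : (↑a⁻¹ : R) * P.2.1 = 1 := by rw [← ha]; simp
  refine ⟨b * a⁻¹, Prod.ext ?_ (Prod.ext ?_ ?_)⟩ <;> simp only [Units.val_mul, hb]
  · linear_combination (↑a⁻¹ : R) * hX - Q.1 * hinv
  · linear_combination -Q.2.1 * hinv
  · linear_combination (↑a⁻¹ : R) * hZ - Q.2.2 * hinv

end ProjEq

section Multiples

variable {R S : Type*} [CommRing R] [CommRing S] (A B : R)

lemma pmul_zero (P : Pt R) : pmul A B 0 P = (0, 1, 0) := rfl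

lemma pmul_succ (n : ℕ) (P : Pt R) : pmul A B (n + 1) P = padd A B (pmul A B n P) P :=
  Function.iterate_succ_apply' _ _ _

lemma ProjEq.pmul {P Q : Pt R} (h : ProjEq P Q) (n : ℕ) :
    ProjEq (pmul A B n P) (pmul A B n Q) := by
  induction n with
  | zero => exact .refl _
  | succ n ih => simpa only [pmul_succ] using ih.padd h

lemma padd_comm (P Q : Pt R) : padd A B P Q = padd A B Q P := by
  simp only [padd, Prod.mk.injEq]
  refine ⟨?_, ?_, ?_⟩ <;> ring

/-- The image of a coordinate triple under a ring homomorphism. -/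
def mapPt (φ : R →+* S) (P : Pt R) : Pt S := (φ P.1, φ P.2.1, φ P.2.2)

variable (φ : R →+* S)

lemma mapPt_padd (P Q : Pt R) :
    mapPt φ (padd A B P Q) = padd (φ A) (φ B) (mapPt φ P) (mapPt φ Q) := by
  simp [mapPt, padd, map_ofNat φ 3]

lemma mapPt_pmul (n : ℕ) (P : Pt R) :
    mapPt φ (pmul A B n P) = pmul (φ A) (φ B) n (mapPt φ P) := by
  induction n with
  | zero => simp [pmul_zero, mapPt]
  | succ n ih => simp only [pmul_succ, mapPt_padd, ih]

lemma ProjEq.mapPt {P Q : Pt R} (h : ProjEq P Q) : ProjEq (mapPt φ P) (mapPt φ Q) := by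
  obtain ⟨u, rfl⟩ := h
  exact ⟨Units.map (φ : R →* S) u, by simp [_root_.mapPt]⟩

end Multiples

section GroupLaw

open WeierstrassCurve.Affine

variable {K : Type*} [Field K]

/-- The Weierstrass curve `y² = x³ + Ax + B`. -/
def shortCurve (A B : K) : WeierstrassCurve.Affine K := ⟨0, 0, 0, A, B⟩

variable {A B : K}

lemma shortCurve_equation {x y : K} :
    (shortCurve A B).Equation x y ↔ y ^ 2 = x ^ 3 + A * x + B := by
  simp [equation_iff, shortCurve]

lemma shortCurve_nonsingular (h2 : (2 : K) ≠ 0) (hD : 4 * A ^ 3 + 27 * B ^ 2 ≠ 0) {x y : K}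
    (h : y ^ 2 = x ^ 3 + A * x + B) : (shortCurve A B).Nonsingular x y := by
  refine (equation_iff_nonsingular_of_Δ_ne_zero ?_).1 (shortCurve_equation.2 h)
  have : (shortCurve A B).Δ = -(2 ^ 4 * (4 * A ^ 3 + 27 * B ^ 2)) := by
    simp only [shortCurve, WeierstrassCurve.Δ, WeierstrassCurve.b₂, WeierstrassCurve.b₄,
      WeierstrassCurve.b₆, WeierstrassCurve.b₈]
    ring
  rw [this]
  exact neg_ne_zero.2 (mul_ne_zero (pow_ne_zero _ h2) hD)

/-- The triple `P` consists of projective coordinates of the point `a`. -/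
def Represents (P : Pt K) : (shortCurve A B).Point → Prop
  | .zero => P.1 = 0 ∧ P.2.1 ≠ 0 ∧ P.2.2 = 0
  | .some x y _ => P.2.2 ≠ 0 ∧ P.1 = x * P.2.2 ∧ P.2.1 = y * P.2.2

lemma represents_zero {P : Pt K} :
    Represents P (0 : (shortCurve A B).Point) ↔ P.1 = 0 ∧ P.2.1 ≠ 0 ∧ P.2.2 = 0 := Iff.rfl

lemma represents_some {P : Pt K} {x y : K} {h : (shortCurve A B).Nonsingular x y} :
    Represents P (Point.some x y h) ↔ P.2.2 ≠ 0 ∧ P.1 = x * P.2.2 ∧ P.2.1 = y * P.2.2 := Iff.rfl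

namespace Represents

variable {P Q : Pt K} {a b : (shortCurve A B).Point}

lemma onCurve (h : Represents P a) : OnCurve A B P := by
  obtain _ | ⟨x, y, ha⟩ := a
  · obtain ⟨h1, -, h3⟩ := h
    simp [OnCurve, h1, h3]
  · obtain ⟨-, h1, h2⟩ := h
    have := shortCurve_equation.1 ha.1
    simp only [OnCurve, h1, h2]
    linear_combination P.2.2 ^ 3 * this

lemma projEq (hP : Represents P a) (hQ : Represents Q a) : ProjEq P Q := by
  obtain _ | ⟨x, y, ha⟩ := a
  · obtain ⟨h1, h2, h3⟩ := hP
    obtain ⟨k1, k2, k3⟩ := hQ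
    exact ⟨.mk0 (Q.2.1 / P.2.1) (div_ne_zero k2 h2),
      Prod.ext (by simp [h1, k1]) (Prod.ext (by simp [h2]) (by simp [h3, k3]))⟩
  · obtain ⟨h1, h2, h3⟩ := hP
    obtain ⟨k1, k2, k3⟩ := hQ
    refine ⟨.mk0 (Q.2.2 / P.2.2) (div_ne_zero k1 h1),
      Prod.ext ?_ (Prod.ext ?_ ?_)⟩ <;> simp only [h2, h3, k2, k3, Units.val_mk0] <;> field_simp

lemma congr (hP : Represents P a) (h : ProjEq P Q) : Represents Q a := by
  obtain ⟨u, rfl⟩ := h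
  cases a <;> simp only [Represents] at * <;> simp [hP] <;> (constructor <;> ring)

lemma unique (hP : Represents P a) (hQ : Represents P b) : a = b := by
  obtain _ | ⟨x, y, ha⟩ := a <;> obtain _ | ⟨x', y', hb⟩ := b
  · rfl
  · exact absurd hP.2.2 hQ.1
  · exact absurd hQ.2.2 hP.1
  · obtain ⟨h1, h2, h3⟩ := hP
    obtain ⟨-, k2, k3⟩ := hQ
    obtain rfl := mul_right_cancel₀ h1 (h2.symm.trans k2)
    obtain rfl := mul_right_cancel₀ h1 (h3.symm.trans k3)
    rfl

lemma Y_eq_zero_or (hP : Represents P a) (hY : P.2.1 = 0) : a + a = 0 := by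
  obtain _ | ⟨x, y, ha⟩ := a
  · exact absurd hY hP.2.1
  · obtain ⟨h1, -, h3⟩ := hP
    have : y = 0 := by simpa [hY, h1] using h3
    subst this
    exact Point.add_self_of_Y_eq (by simp [shortCurve])

end Represents

lemma exists_represents (h2 : (2 : K) ≠ 0) (hD : 4 * A ^ 3 + 27 * B ^ 2 ≠ 0) {P : Pt K}
    (hP : OnCurve A B P) (h0 : P ≠ (0, 0, 0)) :
    ∃ a : (shortCurve A B).Point, Represents P a := by
  obtain ⟨X, Y, Z⟩ := P
  simp only [OnCurve] at hP
  by_cases hZ : Z = 0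
  · subst hZ
    have hX : X = 0 := by simpa using hP.symm
    subst hX
    exact ⟨0, rfl, fun h => h0 (by simp [show Y = 0 from h]), rfl⟩
  · refine ⟨.some (X / Z) (Y / Z) (shortCurve_nonsingular h2 hD ?_), hZ, ?_, ?_⟩
    · field_simp
      linear_combination hP
    · simp [hZ]
    · simp [hZ]

lemma represents_origin : Represents ((0, 1, 0) : Pt K) (0 : (shortCurve A B).Point) := by
  simp [represents_zero]

/-- The addition formulas compute the sum of two points, except when the points differ by a point
of order two, in which case they return the zero triple. -/
lemma represents_padd (h2 : (2 : K) ≠ 0) {P Q : Pt K} {a b : (shortCurve A B).Point}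
    (hP : Represents P a) (hQ : Represents Q b) :
    Represents (padd A B P Q) (a + b) ∨
      (padd A B P Q = (0, 0, 0) ∧ a ≠ b ∧ a + a = b + b) := by
  have aux : ∀ {P Q : Pt K} {b : (shortCurve A B).Point},
      Represents P (0 : (shortCurve A B).Point) → Represents Q b →
      Represents (padd A B P Q) b ∨ (padd A B P Q = (0, 0, 0) ∧ 0 ≠ b ∧ b + b = 0) := by
    rintro ⟨X, Y, Z⟩ Q b ⟨h1, hY, h3⟩ hQ
    simp only at h1 hY h3
    subst h1 h3
    have hpadd : padd A B (0, Y, 0) Q =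
        (Y ^ 2 * Q.2.1 * Q.1, Y ^ 2 * Q.2.1 * Q.2.1, Y ^ 2 * Q.2.1 * Q.2.2) := by
      simp only [padd, Prod.mk.injEq]
      refine ⟨?_, ?_, ?_⟩ <;> ring
    by_cases hQY : Q.2.1 = 0
    · refine .inr ⟨by rw [hpadd, hQY]; simp, ?_, hQ.Y_eq_zero_or hQY⟩
      rintro rfl
      exact hQ.2.1 hQY
    · exact .inl (hQ.congr ⟨.mk0 (Y ^ 2 * Q.2.1) (mul_ne_zero (pow_ne_zero _ hY) hQY), by
        rw [hpadd]; rfl⟩)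
  obtain _ | ⟨x₁, y₁, ha⟩ := a
  · obtain h | ⟨h, h', h''⟩ := aux hP hQ
    · exact .inl (by rwa [← Point.zero_def, zero_add])
    · exact .inr ⟨h, h', by rw [h'', ← Point.zero_def, zero_add]⟩
  obtain _ | ⟨x₂, y₂, hb⟩ := b
  · obtain h | ⟨h, h', h''⟩ := aux hQ hP
    · exact .inl (by rwa [← Point.zero_def, add_zero, padd_comm])
    · exact .inr ⟨by rwa [padd_comm], h'.symm, by rw [h'', ← Point.zero_def, zero_add]⟩
  have e₁ := shortCurve_equation.1 ha.1
  have e₂ := shortCurve_equation.1 hb.1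
  have hP' : ProjEq (x₁, y₁, 1) P :=
    ⟨.mk0 P.2.2 hP.1, Prod.ext (by simp [hP.2.1, mul_comm])
      (Prod.ext (by simp [hP.2.2, mul_comm]) (by simp))⟩
  have hQ' : ProjEq (x₂, y₂, 1) Q :=
    ⟨.mk0 Q.2.2 hQ.1, Prod.ext (by simp [hQ.2.1, mul_comm])
      (Prod.ext (by simp [hQ.2.2, mul_comm]) (by simp))⟩
  have hPQ := hP'.padd (A := A) (B := B) hQ'
  suffices H : Represents (padd A B (x₁, y₁, 1) (x₂, y₂, 1))
      (Point.some x₁ y₁ ha + Point.some x₂ y₂ hb) ∨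
      (padd A B (x₁, y₁, 1) (x₂, y₂, 1) = (0, 0, 0) ∧ Point.some x₁ y₁ ha ≠ Point.some x₂ y₂ hb ∧
        Point.some x₁ y₁ ha + Point.some x₁ y₁ ha = Point.some x₂ y₂ hb + Point.some x₂ y₂ hb) by
    refine H.imp (fun h => h.congr hPQ) fun ⟨h, h'⟩ => ⟨?_, h'⟩
    obtain ⟨u, hu⟩ := hPQ
    rw [hu, h]
    simp
  clear hPQ hP' hQ' hP hQ P Q aux
  have neg_y : ∀ x y : K, (shortCurve A B).negY x y = -y := by simp [shortCurve]
  have add_x : ∀ x x' l : K, (shortCurve A B).addX x x' l = l ^ 2 - x - x' := by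
    simp [shortCurve, addX]
  have add_y : ∀ x x' y l : K, (shortCurve A B).addY x x' y l =
      -(l * (l ^ 2 - x - x' - x) + y) := by
    simp [shortCurve, addY, negAddY, addX]
  have add_self : ∀ {x y : K} (h : (shortCurve A B).Nonsingular x y), y = 0 →
      Point.some x y h + Point.some x y h = 0 := fun h hy =>
    Point.add_self_of_Y_eq (by rw [neg_y, hy, neg_zero])
  rcases hS : padd A B (x₁, y₁, 1) (x₂, y₂, 1) with ⟨SX, SY, SZ⟩
  simp only [padd, Prod.mk.injEq] at hS
  obtain ⟨hSX, hSY, hSZ⟩ := hS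
  by_cases hx : x₁ = x₂
  · subst hx
    by_cases hy : y₁ = -y₂
    · obtain rfl : y₂ = -y₁ := by rw [hy, neg_neg]
      have hb' : Point.some x₁ (-y₁) hb = -Point.some x₁ y₁ ha := by
        rw [Point.neg_some]
        simp only [neg_y]
      have dX : SX = 0 := by rw [← hSX]; ring
      have dZ : SZ = 0 := by rw [← hSZ]; ring
      have dY : SY = -((3 * x₁ ^ 2 + A) * ((3 * x₁ ^ 2 + A) ^ 2 - 12 * x₁ * y₁ ^ 2) +
          8 * y₁ ^ 4) := by
        rw [← hSY]
        linear_combination (- 3*A*x₁ + 9*B - 27*x₁^3 + 9*y₁^2) * e₁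
      by_cases hY : SY = 0
      · right
        have hy0 : y₁ ≠ 0 := by
          intro h0
          have ht : 3 * x₁ ^ 2 + A = 0 := by
            have : (3 * x₁ ^ 2 + A) ^ 3 = 0 := by rw [hY, h0] at dY; linear_combination dY
            exact eq_zero_of_pow_eq_zero this
          have := ((nonsingular_iff _ _).1 ha).2
          simp [shortCurve, h0] at this
          exact this ht.symm
        have hyn : y₁ ≠ (shortCurve A B).negY x₁ y₁ := by
          rw [neg_y]
          intro h
          exact mul_ne_zero h2 hy0 (by linear_combination h)
        refine ⟨by rw [dX, dZ, hY], ?_, ?_⟩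
        · intro h
          rw [neg_y] at hyn
          exact hyn (Point.some.inj h).2
        have h4 : (Point.some x₁ y₁ ha + Point.some x₁ y₁ ha) +
            (Point.some x₁ y₁ ha + Point.some x₁ y₁ ha) = 0 := by
          rw [Point.add_self_of_Y_ne hyn]
          apply add_self
          rw [add_y, slope_of_Y_ne rfl hyn, neg_y]
          simp only [shortCurve]
          rw [sub_neg_eq_add, ← two_mul]
          field_simp
          rw [hY] at dY
          linear_combination -dY
        rw [hb', ← neg_add]
        exact eq_neg_of_add_eq_zero_left h4
      · left
        rw [hb', add_neg_cancel]
        exact ⟨dX, hY, dZ⟩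
    · obtain rfl : y₁ = y₂ :=
        (eq_or_eq_neg_of_sq_eq_sq _ _ (e₁.trans e₂.symm)).resolve_right hy
      left
      have hyn : y₁ ≠ (shortCurve A B).negY x₁ y₁ := by rwa [neg_y]
      have hy0 : y₁ ≠ 0 := by
        rintro rfl
        exact hy neg_zero.symm
      have dZ : SZ = 8 * y₁ ^ 3 := by
        rw [← hSZ]
        linear_combination (- 6*y₁) * e₁
      have dX : SX = 2 * y₁ * ((3 * x₁ ^ 2 + A) ^ 2 - 8 * x₁ * y₁ ^ 2) := by
        rw [← hSX]
        linear_combination (18*x₁*y₁) * e₁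
      have dY : SY = -((3 * x₁ ^ 2 + A) * ((3 * x₁ ^ 2 + A) ^ 2 - 12 * x₁ * y₁ ^ 2) +
          8 * y₁ ^ 4) := by
        rw [← hSY]
        linear_combination (- 3*A*x₁ + 9*B - 27*x₁^3 + 9*y₁^2) * e₁
      rw [Point.add_self_of_Y_ne hyn, represents_some, add_x, add_y]
      generalize hl : (shortCurve A B).slope x₁ x₁ y₁ y₁ = l
      rw [slope_of_Y_ne rfl hyn, neg_y, div_eq_iff (sub_ne_zero.2 hy)] at hl
      simp only [shortCurve] at hl
      refine ⟨?_, ?_, ?_⟩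
      · rw [dZ, show (8 : K) = 2 ^ 3 by norm_num]
        exact mul_ne_zero (pow_ne_zero _ h2) (pow_ne_zero _ hy0)
      · linear_combination dX - (l ^ 2 - x₁ - x₁) * dZ +
          2 * y₁ * (l * (2 * y₁) + (3 * x₁ ^ 2 + A)) * hl
      · linear_combination dY + (l * (l ^ 2 - x₁ - x₁ - x₁) + y₁) * dZ -
          ((2 * l * y₁) ^ 2 + 2 * l * y₁ * (3 * x₁ ^ 2 + A) + (3 * x₁ ^ 2 + A) ^ 2 -
            12 * x₁ * y₁ ^ 2) * hl
  · have hd : x₁ - x₂ ≠ 0 := sub_ne_zero.2 hx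
    have dX : (x₁ - x₂) ^ 2 * SX = SZ * ((y₁ - y₂) ^ 2 - (x₁ + x₂) * (x₁ - x₂) ^ 2) := by
      rw [← hSX, ← hSZ]
      linear_combination (- A*x₁*y₁ - A*x₁*y₂ - 2*A*y₁*x₂ + 3*A*x₂*y₂ - 3*B*y₁ + 2*B*y₂ - 3*x₁^2*x₂*y₂ - 3*x₁*y₁*x₂^2 + 3*x₁*x₂^2*y₂ - y₁^2*y₂ + y₁*y₂^2 + 2*x₂^3*y₂ + y₂^3) * e₁ +
        (4*A*x₁*y₁ - A*x₁*y₂ - A*y₁*x₂ - A*x₂*y₂ + 3*B*y₁ - 2*B*y₂ + 3*x₁^3*y₁ + x₁^3*y₂ + 3*x₁^2*y₁*x₂ - 3*x₁^2*x₂*y₂ - 3*x₁*y₁*x₂^2 - y₁*y₂^2) * e₂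
    have dY : (x₁ - x₂) ^ 3 * SY = -SZ * ((y₁ - y₂) * ((y₁ - y₂) ^ 2 -
        (2 * x₁ + x₂) * (x₁ - x₂) ^ 2) + y₁ * (x₁ - x₂) ^ 3) := by
      rw [← hSY, ← hSZ]
      linear_combination (A^2*x₁^2 + 2*A*B*x₁ - 2*A*x₁^3*x₂ + 6*A*x₁^2*x₂^2 + A*x₁*y₁^2 + 2*A*x₁*x₂^3 - 3*A*x₁*y₂^2 + 2*A*y₁^2*x₂ - 5*A*y₁*x₂*y₂ - 4*A*x₂^4 + 3*A*x₂*y₂^2 + B^2 - 2*B*x₁^3 + 12*B*x₁*x₂^2 + 3*B*y₁^2 - 5*B*y₁*y₂ - 8*B*x₂^3 - 2*x₁^3*x₂^3 + 2*x₁^3*y₂^2 + 3*x₁^2*y₁*x₂*y₂ + 9*x₁^2*x₂^4 - 15*x₁^2*x₂*y₂^2 + 3*x₁*y₁^2*x₂^2 - 6*x₁*y₁*x₂^2*y₂ - 6*x₁*x₂^5 + 15*x₁*x₂^2*y₂^2 + y₁^3*y₂ - 2*y₁^2*y₂^2 - 2*y₁*x₂^3*y₂ - 2*x₂^3*y₂^2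 + 2*y₂^4) * e₁ +
        (- 3*A^2*x₁^2 + 3*A^2*x₁*x₂ - A^2*x₂^2 - 3*A*B*x₁ + A*B*x₂ + 3*A*x₁^4 - 14*A*x₁^3*x₂ + 9*A*x₁^2*x₂^2 - 2*A*x₁*y₁^2 + 5*A*x₁*y₁*y₂ - A*x₂*y₂^2 - B^2 + 10*B*x₁^3 - 27*B*x₁^2*x₂ + 15*B*x₁*x₂^2 - 2*B*y₁^2 + 5*B*y₁*y₂ - B*y₂^2 + 2*x₁^6 - 9*x₁^5*x₂ + 6*x₁^4*x₂^2 - 2*x₁^3*y₁^2 + 2*x₁^3*y₁*y₂ + 2*x₁^3*y₂^2 + 6*x₁^2*y₁*x₂*y₂ - 3*x₁^2*x₂*y₂^2 - 3*x₁*y₁*x₂^2*y₂ - y₁*y₂^3) * e₂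
    have dZ : SZ = (y₁ + y₂) * ((y₁ + y₂) ^ 2 - (2 * x₁ + x₂) * (x₁ - x₂) ^ 2) +
        y₁ * (x₁ - x₂) ^ 3 := by
      rw [← hSZ]
      linear_combination (- y₁ - 2*y₂) * e₁ + (- 2*y₁ - y₂) * e₂
    by_cases hZ : SZ = 0
    · right
      refine ⟨?_, fun h => hx (Point.some.inj h).1, ?_⟩
      · have hX0 : SX = 0 := by simpa [hZ, hd] using dX
        have hY0 : SY = 0 := by simpa [hZ, hd] using dY
        rw [hX0, hY0, hZ]
      · have h4 : (Point.some x₁ y₁ ha + -Point.some x₂ y₂ hb) +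
            (Point.some x₁ y₁ ha + -Point.some x₂ y₂ hb) = 0 := by
          rw [Point.neg_some, Point.add_of_X_ne hx]
          apply add_self
          rw [add_y, slope_of_X_ne hx, neg_y]
          field_simp
          rw [hZ] at dZ
          linear_combination dZ
        rw [add_add_add_comm, ← neg_add] at h4
        rw [eq_neg_of_add_eq_zero_left h4, neg_neg]
    · left
      rw [Point.add_of_X_ne hx, represents_some, add_x, add_y, slope_of_X_ne hx]
      refine ⟨hZ, ?_, ?_⟩
      · field_simp
        linear_combination dX
      · field_simp
        linear_combination dY

lemma eq_of_add_self_eq_of_torsion {M : Type*} [AddCommGroup M] {p : ℕ} (hp : Odd p) {a b : M}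
    (ha : p • a = 0) (hb : p • b = 0) (h : a + a = b + b) : a = b := by
  obtain ⟨m, rfl⟩ := hp
  have h2 : 2 • (a - b) = 0 := by rw [two_nsmul, sub_add_sub_comm, h, sub_self]
  have h3 : (2 * m + 1) • (a - b) = 0 := by rw [nsmul_sub, ha, hb, sub_self]
  rw [add_nsmul, mul_comm, mul_nsmul', h2, nsmul_zero, zero_add, one_nsmul] at h3
  exact sub_eq_zero.1 h3

namespace Represents

variable {p : ℕ} {P Q : Pt K} {a b : (shortCurve A B).Point}

lemma padd_of_torsion (h2 : (2 : K) ≠ 0) (hp : Odd p) (hP : Represents P a)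
    (hQ : Represents Q b) (ha : p • a = 0) (hb : p • b = 0) :
    Represents (padd A B P Q) (a + b) :=
  (represents_padd h2 hP hQ).resolve_right fun ⟨_, hne, h⟩ =>
    hne (eq_of_add_self_eq_of_torsion hp ha hb h)

lemma pmul_of_torsion (h2 : (2 : K) ≠ 0) (hp : Odd p) (hP : Represents P a) (ha : p • a = 0)
    (n : ℕ) : Represents (pmul A B n P) (n • a) := by
  induction n with
  | zero => simpa [pmul_zero] using represents_origin
  | succ n ih =>
    rw [pmul_succ, succ_nsmul]
    exact ih.padd_of_torsion h2 hp hP (by rw [smul_comm, ha, smul_zero]) ha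

lemma pmul_eq_zero_or (h2 : (2 : K) ≠ 0) (hP : Represents P a) (n : ℕ) :
    pmul A B n P = (0, 0, 0) ∨ Represents (pmul A B n P) (n • a) := by
  induction n with
  | zero => exact .inr (by simpa [pmul_zero] using represents_origin)
  | succ n ih =>
    rw [pmul_succ, succ_nsmul]
    obtain h | h := ih
    · exact .inl (by rw [h]; simp [padd])
    · exact (represents_padd h2 h hP).symm.imp_left And.left

lemma torsion (h2 : (2 : K) ≠ 0) (hP : Represents P a) (h : ProjEq (pmul A B p P) (0, 1, 0)) :
    p • a = 0 := by
  obtain h0 | h0 := hP.pmul_eq_zero_or h2 p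
  · obtain ⟨u, hu⟩ := h
    simp [h0] at hu
  · exact (h0.congr h).unique represents_origin

lemma Y_ne_zero (hp : Odd p) (hP : Represents P a) (ha : p • a = 0) : P.2.1 ≠ 0 := by
  intro hY
  have h0 : a = 0 := eq_of_add_self_eq_of_torsion hp ha (smul_zero p)
    (by rw [hP.Y_eq_zero_or hY, add_zero])
  subst h0
  exact hP.2.1 hY

end Represents

end GroupLaw

section Translate

open TrivSqZeroExt

variable {K : Type*} [Field K] (A B : K)

/-- The constant lift of a coordinate triple to the dual numbers. -/
def liftPt (P : Pt K) : Pt (DualNumber K) := mapPt (inlHom K K) P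

/-- The reduction of a coordinate triple over the dual numbers. -/
def redPt (P : Pt (DualNumber K)) : Pt K := mapPt (fstHom K K K).toRingHom P

lemma redPt_def (P : Pt (DualNumber K)) : redPt P = (P.1.fst, P.2.1.fst, P.2.2.fst) := rfl

lemma redPt_pmul (n : ℕ) (P : Pt (DualNumber K)) :
    redPt (pmul (ιD A) (ιD B) n P) = pmul A B n (redPt P) :=
  mapPt_pmul _ _ (fstHom K K K).toRingHom n P

/-- The point `P + O_k` over the dual numbers, for a point `P` over the base field. -/
def translatePt (k : K) (P : Pt K) : Pt (DualNumber K) := padd (ιD A) (ιD B) (liftPt P) (Oinf k)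

lemma translatePt_eq (k : K) (P : Pt K) : translatePt A B k P =
    (inl (P.1 * P.2.1) + inr (k * (P.2.1 ^ 2 - 2 * A * P.1 * P.2.2 - 3 * B * P.2.2 ^ 2)),
      inl (P.2.1 ^ 2), inl (P.2.1 * P.2.2) + inr (k * (3 * P.1 ^ 2 + A * P.2.2 ^ 2))) := by
  have h3 : (3 : DualNumber K) = inl 3 := rfl
  simp only [translatePt, padd, liftPt, mapPt, Oinf, h3, DualNumber.eps]
  refine Prod.ext ?_ (Prod.ext ?_ ?_) <;> ext <;>
    simp [pow_two, fst_mul, snd_mul] <;> ring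

variable {A B} {P Q : Pt K}

lemma ProjEq.translatePt (h : ProjEq P Q) (k : K) :
    ProjEq (translatePt A B k P) (translatePt A B k Q) :=
  (h.mapPt (inlHom K K)).padd (.refl _)

lemma onCurve_translatePt (hP : OnCurve A B P) (k : K) :
    OnCurve (ιD A) (ιD B) (translatePt A B k P) := by
  rw [translatePt_eq]
  simp only [OnCurve] at *
  ext <;> simp [pow_succ, fst_mul, snd_mul]
  · linear_combination P.2.1 ^ 3 * hP
  · ring

lemma projEq_redPt_translatePt (hY : P.2.1 ≠ 0) (k : K) : ProjEq P (redPt (translatePt A B k P)) := by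
  rw [translatePt_eq]
  exact ⟨.mk0 P.2.1 hY, by simp [redPt_def, mul_comm, pow_two]⟩

lemma translatePt_zero_origin : translatePt A B 0 (0, 1, 0) = (0, 1, 0) := by
  rw [translatePt_eq]
  simp

lemma exists_projEq_normalized (hP : OnCurve A B P) (hY : P.2.1 ≠ 0) :
    ∃ x z : K, x ^ 3 = z - A * x * z ^ 2 - B * z ^ 3 ∧ ProjEq (x, 1, z) P := by
  refine ⟨P.1 / P.2.1, P.2.2 / P.2.1, ?_, .mk0 P.2.1 hY, ?_⟩
  · simp only [OnCurve] at hP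
    field_simp
    linear_combination -hP
  · refine Prod.ext ?_ (Prod.ext ?_ ?_) <;> simp <;> field_simp

/-- The gradient of the Weierstrass equation has a nonzero `X` or `Z` component at each point with
`Y = 1`. -/
lemma gradient_ne_zero (h2 : (2 : K) ≠ 0) {x z : K} (h : x ^ 3 = z - A * x * z ^ 2 - B * z ^ 3) :
    1 - 2 * A * x * z - 3 * B * z ^ 2 ≠ 0 ∨ 3 * x ^ 2 + A * z ^ 2 ≠ 0 := by
  by_contra! ⟨hX, hZ⟩
  have hz : z = 0 := by
    refine (mul_eq_zero.1 (?_ : 2 * z = 0)).resolve_left h2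
    linear_combination x * hZ - 3 * h - z * hX
  simp [hz] at hX

lemma translatePt_inj (h2 : (2 : K) ≠ 0) (hP : OnCurve A B P) (hY : P.2.1 ≠ 0) {k l : K}
    (h : ProjEq (translatePt A B k P) (translatePt A B l P)) : k = l := by
  obtain ⟨x, z, hxz, hP'⟩ := exists_projEq_normalized hP hY
  obtain ⟨u, hu⟩ := ((hP'.translatePt k).trans h).trans (hP'.translatePt l).symm
  simp only [translatePt_eq, Prod.mk.injEq] at hu
  obtain ⟨hX, hu, hZ⟩ := hu
  have hu1 : (u : DualNumber K) = 1 := by simpa using hu.symm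
  rw [hu1] at hX hZ
  have hX' := congrArg TrivSqZeroExt.snd hX
  have hZ' := congrArg TrivSqZeroExt.snd hZ
  simp only [one_mul, snd_add, snd_inl, snd_inr, zero_add, one_pow] at hX' hZ'
  obtain h0 | h0 := gradient_ne_zero h2 hxz
  · exact (mul_right_cancel₀ h0 hX').symm
  · exact (mul_right_cancel₀ h0 hZ').symm

lemma exists_translatePt (h2 : (2 : K) ≠ 0) {P : Pt (DualNumber K)}
    (hP : OnCurve (ιD A) (ιD B) P) (hY : (redPt P).2.1 ≠ 0) :
    ∃ k, ProjEq (translatePt A B k (redPt P)) P := by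
  have hu : IsUnit P.2.1 := isUnit_iff_isUnit_fst.2 (IsUnit.mk0 _ hY)
  obtain ⟨u, hu⟩ := hu
  have hPN : ProjEq P (↑u⁻¹ * P.1, 1, ↑u⁻¹ * P.2.2) := ⟨u⁻¹, by simp [← hu]⟩
  have hN := hPN.onCurve hP
  generalize ↑u⁻¹ * P.1 = X at hPN hN
  generalize ↑u⁻¹ * P.2.2 = Z at hPN hN
  have hred : ProjEq (redPt P) (X.fst, 1, Z.fst) := hPN.mapPt (fstHom K K K).toRingHom
  simp only [OnCurve] at hN
  have hN₀ := congrArg TrivSqZeroExt.fst hN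
  have hN₁ := congrArg TrivSqZeroExt.snd hN
  simp [pow_succ, fst_mul, snd_mul] at hN₀ hN₁
  have hxz : X.fst ^ 3 = Z.fst - A * X.fst * Z.fst ^ 2 - B * Z.fst ^ 3 := by
    linear_combination -hN₀
  have htan : Z.snd * (1 - 2 * A * X.fst * Z.fst - 3 * B * Z.fst ^ 2) =
      X.snd * (3 * X.fst ^ 2 + A * Z.fst ^ 2) := by
    linear_combination hN₁
  obtain ⟨k, hkX, hkZ⟩ : ∃ k,
      k * (1 - 2 * A * X.fst * Z.fst - 3 * B * Z.fst ^ 2) = X.snd ∧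
        k * (3 * X.fst ^ 2 + A * Z.fst ^ 2) = Z.snd := by
    obtain h0 | h0 := gradient_ne_zero h2 hxz
    · refine ⟨X.snd / (1 - 2 * A * X.fst * Z.fst - 3 * B * Z.fst ^ 2), div_mul_cancel₀ _ h0, ?_⟩
      rw [div_mul_eq_mul_div, div_eq_iff h0, htan]
    · refine ⟨Z.snd / (3 * X.fst ^ 2 + A * Z.fst ^ 2), ?_, div_mul_cancel₀ _ h0⟩
      rw [div_mul_eq_mul_div, div_eq_iff h0, htan]
  refine ⟨k, (hred.translatePt k).trans (.trans ?_ hPN.symm)⟩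
  have : translatePt A B k (X.fst, 1, Z.fst) = (X, 1, Z) := by
    rw [translatePt_eq]
    refine Prod.ext ?_ (Prod.ext ?_ ?_) <;> ext <;> simp [hkX, hkZ]
  rw [this]
  exact .refl _

variable (A B) in
/-- The derivative of the addition formulas in their first argument `P`, along `V`. -/
def paddDeriv (P Q V : Pt K) : Pt K :=
  let s := P.1 * Q.2.2 + Q.1 * P.2.2
  let t := P.2.2 * Q.2.2
  let s' := V.1 * Q.2.2 + Q.1 * V.2.2
  let t' := V.2.2 * Q.2.2
  let m := A * P.1 * Q.1 + 3 * B * s - A ^ 2 * t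
  let m' := A * V.1 * Q.1 + 3 * B * s' - A ^ 2 * t'
  let y := P.2.1 * Q.2.1
  let y' := V.2.1 * Q.2.1
  let g := A * s + 3 * B * t
  let g' := A * s' + 3 * B * t'
  let c := 3 * P.1 * Q.1 + A * t
  let c' := 3 * V.1 * Q.1 + A * t'
  let e := P.1 * Q.2.1 + Q.1 * P.2.1
  let e' := V.1 * Q.2.1 + Q.1 * V.2.1
  let h := P.2.1 * Q.2.2 + Q.2.1 * P.2.2
  let h' := V.2.1 * Q.2.2 + Q.2.1 * V.2.2
  (e' * (y - g) + e * (y' - g') - h' * m - h * m',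
    c' * m + c * m' + 2 * (y * y' - g * g'),
    h' * (y + g) + h * (y' + g') + e' * c + e * c')

lemma padd_inl_add_inr (P Q V W : Pt K) (k l : K) :
    padd (ιD A) (ιD B)
        (inl P.1 + inr (k * V.1), inl P.2.1 + inr (k * V.2.1), inl P.2.2 + inr (k * V.2.2))
        (inl Q.1 + inr (l * W.1), inl Q.2.1 + inr (l * W.2.1), inl Q.2.2 + inr (l * W.2.2)) =
      (inl (padd A B P Q).1 +
          inr (k * (paddDeriv A B P Q V).1 + l * (paddDeriv A B Q P W).1),
        inl (padd A B P Q).2.1 +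
          inr (k * (paddDeriv A B P Q V).2.1 + l * (paddDeriv A B Q P W).2.1),
        inl (padd A B P Q).2.2 +
          inr (k * (paddDeriv A B P Q V).2.2 + l * (paddDeriv A B Q P W).2.2)) := by
  have h3 : (3 : DualNumber K) = inl 3 := rfl
  simp only [padd, paddDeriv, h3]
  refine Prod.ext ?_ (Prod.ext ?_ ?_) <;> ext <;> simp [pow_two, fst_mul, snd_mul] <;> ring

/-- The tangent direction at a point with `Y = 1` along which `Θ` translates it. -/
abbrev tangent (A B x z : K) : Pt K :=
  (1 - 2 * A * x * z - 3 * B * z ^ 2, 0, 3 * x ^ 2 + A * z ^ 2)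

lemma translatePt_normalized (k x z : K) : translatePt A B k (x, 1, z) =
    (inl x + inr (k * (tangent A B x z).1), inl 1 + inr (k * (tangent A B x z).2.1),
      inl z + inr (k * (tangent A B x z).2.2)) := by
  rw [translatePt_eq]
  simp

/-- The addition law preserves the translation-invariant tangent direction, `X` component. -/
lemma paddDeriv_tangent_X {x₁ z₁ x₂ z₂ : K}
    (e₁ : x₁ ^ 3 = z₁ - A * x₁ * z₁ ^ 2 - B * z₁ ^ 3)
    (e₂ : x₂ ^ 3 = z₂ - A * x₂ * z₂ ^ 2 - B * z₂ ^ 3) :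
    let S := padd A B (x₁, 1, z₁) (x₂, 1, z₂)
    let D := paddDeriv A B (x₁, 1, z₁) (x₂, 1, z₂) (tangent A B x₁ z₁)
    D.1 * S.2.1 - S.1 * D.2.1 = S.2.1 ^ 2 - 2 * A * S.1 * S.2.2 - 3 * B * S.2.2 ^ 2 := by
  simp only [padd, paddDeriv]
  linear_combination
          -(12*A^4*x₁*z₁*z₂^3 + 4*A^4*x₁*z₂^4 + 36*A^4*z₁^2*x₂*z₂^2 + 16*A^4*z₁*x₂*z₂^3 +
          45*A^3*B*z₁^2*z₂^3 + 18*A^3*B*z₁*z₂^4 + 6*A^3*x₁^2*x₂*z₂^2 - 12*A^3*x₁*z₁*x₂^2*z₂ +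
          6*A^3*x₁*x₂^2*z₂^2 + 24*A^3*z₁^2*x₂^3 - 18*A^3*z₁^2*z₂ + 2*A^3*z₂^3 -
          9*A^2*B*x₁^2*z₂^3 - 54*A^2*B*x₁*z₁*x₂*z₂^2 - 9*A^2*B*x₁*x₂*z₂^3 -
          27*A^2*B*z₁^2*x₂^2*z₂ + 18*A^2*x₁^2*x₂^3 + 18*A^2*x₁*x₂^4 - 6*A^2*x₁*x₂*z₂ +
          6*A^2*x₂^2*z₂ + 54*A*B^2*x₁*z₁*z₂^3 + 27*A*B^2*x₁*z₂^4 + 81*A*B^2*z₁^2*x₂*z₂^2 +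
          162*A*B^2*z₁*x₂*z₂^3 + 81*A*B*x₁^2*x₂^2*z₂ + 54*A*B*x₁*z₁*x₂^3 + 81*A*B*x₁*x₂^3*z₂ -
          9*A*B*x₁*z₂^2 + 54*A*B*z₁*x₂^4 - 36*A*B*z₁*x₂*z₂ - 9*A*B*x₂*z₂^2 + 162*B^3*z₁^2*z₂^3 +
          162*B^3*z₁*z₂^4 + 162*B^2*x₁^2*x₂*z₂^2 + 162*B^2*x₁*z₁*x₂^2*z₂ + 162*B^2*x₁*x₂^2*z₂^2
          + 81*B^2*z₁^2*x₂^3 + 162*B^2*z₁*x₂^3*z₂ - 54*B^2*z₁*z₂^2 - 27*B*x₂^3 + 18*B*z₂) * e₁ -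
          (- 18*A^4*x₁*z₁^4 + 8*A^4*x₁*z₁^3*z₂ + 2*A^4*z₁^4*x₂ - 18*A^3*B*z₁^5 + 9*A^3*B*z₁^4*z₂
          - 18*A^3*x₁^3*z₁^2 - 6*A^3*x₁^2*z₁^2*x₂ + 22*A^3*z₁^3 + 6*A^3*z₁^2*z₂ -
          27*A^2*B*x₁^2*z₁^2*z₂ - 54*A^2*B*x₁*z₁^3*x₂ + 12*A^2*x₁^2*z₁ + 6*A^2*x₁^2*z₂ +
          18*A^2*x₁*z₁*x₂ - 27*A*B^2*x₁*z₁^3*z₂ - 27*A*B^2*z₁^4*x₂ + 36*A*B*x₁*z₁^2 +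
          27*A*B*x₁*z₁*z₂ + 45*A*B*z₁^2*x₂ + 81*B^2*x₁^2*z₁^2*x₂ + 54*B^2*z₁^3 + 108*B^2*z₁^2*z₂
          - 27*B*x₁^2*x₂ - 18*B*z₁) * e₂

/-- The addition law preserves the translation-invariant tangent direction, `Z` component. -/
lemma paddDeriv_tangent_Z {x₁ z₁ x₂ z₂ : K}
    (e₁ : x₁ ^ 3 = z₁ - A * x₁ * z₁ ^ 2 - B * z₁ ^ 3)
    (e₂ : x₂ ^ 3 = z₂ - A * x₂ * z₂ ^ 2 - B * z₂ ^ 3) :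
    let S := padd A B (x₁, 1, z₁) (x₂, 1, z₂)
    let D := paddDeriv A B (x₁, 1, z₁) (x₂, 1, z₂) (tangent A B x₁ z₁)
    D.2.2 * S.2.1 - S.2.2 * D.2.1 = 3 * S.1 ^ 2 + A * S.2.2 ^ 2 := by
  simp only [padd, paddDeriv]
  linear_combination
          -(- 6*A^4*z₁^2*z₂^3 - 4*A^4*z₁*z₂^4 + 6*A^3*x₁^2*z₂^3 - 12*A^3*x₁*z₁*x₂*z₂^2 -
          6*A^3*x₁*x₂*z₂^3 + 6*A^3*z₁^2*x₂^2*z₂ - 24*A^3*z₁*x₂^2*z₂^2 + 18*A^2*B*x₁*z₁*z₂^3 +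
          108*A^2*B*z₁^2*x₂*z₂^2 - 36*A^2*B*z₁*x₂*z₂^3 - 54*A^2*x₁^2*x₂^2*z₂ - 36*A^2*x₁*z₁*x₂^3
          - 54*A^2*x₁*x₂^3*z₂ + 6*A^2*x₁*z₂^2 - 36*A^2*z₁*x₂^4 + 24*A^2*z₁*x₂*z₂ + 6*A^2*x₂*z₂^2
          + 54*A*B^2*z₁^2*z₂^3 - 54*A*B^2*z₁*z₂^4 - 81*A*B*x₁^2*x₂*z₂^2 - 162*A*B*x₁*z₁*x₂^2*z₂
          - 81*A*B*x₁*x₂^2*z₂^2 + 54*A*B*z₁^2*x₂^3 - 81*A*B*z₁^2*z₂ - 108*A*B*z₁*x₂^3*z₂ +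
          36*A*B*z₁*z₂^2 + 9*A*B*z₂^3 + 18*A*x₂^3 - 12*A*z₂ - 324*B^2*x₁*z₁*x₂*z₂^2 -
          81*B^2*x₁*x₂*z₂^3 - 81*B^2*z₁^2*x₂^2*z₂ - 162*B^2*z₁*x₂^2*z₂^2 + 81*B*x₁^2*x₂^3 +
          81*B*x₁*x₂^4 - 27*B*x₁*x₂*z₂ + 27*B*x₂^2*z₂) * e₁ -
          (- 2*A^4*z₁^4*z₂ + 6*A^3*x₁^2*z₁^2*z₂ + 24*A^3*x₁*z₁^3*x₂ - 81*A^2*B*x₁*z₁^4 +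
          54*A^2*B*x₁*z₁^3*z₂ + 27*A^2*B*z₁^4*x₂ - 24*A^2*x₁*z₁^2 - 18*A^2*x₁*z₁*z₂ -
          30*A^2*z₁^2*x₂ - 81*A*B^2*z₁^5 + 27*A*B^2*z₁^4*z₂ - 81*A*B*x₁^3*z₁^2 -
          81*A*B*x₁^2*z₁^2*x₂ + 63*A*B*z₁^3 - 45*A*B*z₁^2*z₂ + 18*A*x₁^2*x₂ + 12*A*z₁ -
          81*B^2*x₁^2*z₁^2*z₂ - 81*B^2*x₁*z₁^3*x₂ + 54*B*x₁^2*z₁ + 27*B*x₁^2*z₂ + 81*B*x₁*z₁*x₂) * e₂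

/-- Adding points at infinity is compatible with the addition formulas; this expresses the
translation invariance of the invariant differential. -/
lemma translatePt_padd (hP : OnCurve A B P) (hQ : OnCurve A B Q) (hPY : P.2.1 ≠ 0)
    (hQY : Q.2.1 ≠ 0) (hPQ : (padd A B P Q).2.1 ≠ 0) (k l : K) :
    ProjEq (padd (ιD A) (ιD B) (translatePt A B k P) (translatePt A B l Q))
      (translatePt A B (k + l) (padd A B P Q)) := by
  obtain ⟨x₁, z₁, e₁, hP'⟩ := exists_projEq_normalized hP hPY
  obtain ⟨x₂, z₂, e₂, hQ'⟩ := exists_projEq_normalized hQ hQY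
  have hPQ' := hP'.padd (A := A) (B := B) hQ'
  have hY : (padd A B (x₁, 1, z₁) (x₂, 1, z₂)).2.1 ≠ 0 := by
    intro h0
    obtain ⟨u, hu⟩ := hPQ'
    exact hPQ (by rw [hu, h0, mul_zero])
  refine ((hP'.translatePt k).padd (hQ'.translatePt l)).symm.trans
    (.trans ?_ (hPQ'.translatePt (k + l)))
  have hX₁ := paddDeriv_tangent_X e₁ e₂
  have hZ₁ := paddDeriv_tangent_Z e₁ e₂
  have hX₂ := paddDeriv_tangent_X e₂ e₁
  have hZ₂ := paddDeriv_tangent_Z e₂ e₁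
  rw [translatePt_normalized, translatePt_normalized,
    padd_inl_add_inr (x₁, 1, z₁) (x₂, 1, z₂), translatePt_eq]
  rw [padd_comm A B (x₂, 1, z₂)] at hX₂ hZ₂
  generalize padd A B (x₁, 1, z₁) (x₂, 1, z₂) = S at *
  generalize paddDeriv A B (x₁, 1, z₁) (x₂, 1, z₂) (tangent A B x₁ z₁) = D₁ at *
  generalize paddDeriv A B (x₂, 1, z₂) (x₁, 1, z₁) (tangent A B x₂ z₂) = D₂ at *
  dsimp only at hX₁ hX₂ hZ₁ hZ₂
  refine .of_isUnit (isUnit_iff_isUnit_fst.2 (IsUnit.mk0 _ ?_))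
    (isUnit_iff_isUnit_fst.2 (IsUnit.mk0 _ ?_)) ?_ ?_
  · simpa using hY
  · simpa using hY
  · ext
    · simp [fst_mul]
      ring
    · simp [fst_mul, snd_mul]
      linear_combination -S.2.1 * (k * hX₁ + l * hX₂)
  · ext
    · simp [fst_mul]
      ring
    · simp [fst_mul, snd_mul]
      linear_combination -S.2.1 * (k * hZ₁ + l * hZ₂)

end Translate

section Torsion

open TrivSqZeroExt

variable {K : Type*} [Field K] {A B : K} {P : Pt K} {a : (shortCurve A B).Point} {p : ℕ}

lemma pmul_translatePt (h2 : (2 : K) ≠ 0) (hp : Odd p) (hP : Represents P a) (ha : p • a = 0)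
    (k : K) (n : ℕ) : ProjEq (pmul (ιD A) (ιD B) n (translatePt A B k P))
      (translatePt A B (n * k) (pmul A B n P)) := by
  induction n with
  | zero => simpa [pmul_zero, translatePt_zero_origin] using ProjEq.refl _
  | succ n ih =>
    have hn := hP.pmul_of_torsion h2 hp ha
    have hY (m : ℕ) : (pmul A B m P).2.1 ≠ 0 :=
      (hn m).Y_ne_zero hp (by rw [smul_comm, ha, smul_zero])
    have hadd := translatePt_padd (hn n).onCurve hP.onCurve (hY n) (hP.Y_ne_zero hp ha)
      (by simpa only [pmul_succ] using hY (n + 1)) (n * k) k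
    rw [pmul_succ, pmul_succ, Nat.cast_succ, add_one_mul]
    exact (ih.padd (.refl _)).trans hadd

/-- Every translate of a `p`-torsion point by a point at infinity is `p`-torsion. -/
lemma pmul_translatePt_char (h2 : (2 : K) ≠ 0) (hp : Odd p) (hpK : (p : K) = 0)
    (hP : Represents P a) (ha : p • a = 0) (k : K) :
    ProjEq (pmul (ιD A) (ιD B) p (translatePt A B k P)) (0, 1, 0) := by
  have h := pmul_translatePt h2 hp hP ha k p
  have h0 := hP.pmul_of_torsion h2 hp ha p
  rw [ha] at h0
  rw [hpK, zero_mul] at h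
  refine h.trans ?_
  simpa only [translatePt_zero_origin] using (h0.projEq represents_origin).translatePt 0

end Torsion

/-- for the canonical lift of an ordinary curve (with `E[p]` cyclic of
order `p`, generated by `G`), the `p`-torsion of `Ẽ(K[ε])` is `E[p] ⊕ Θ`: the map
`(n, k) ↦ n•G + O_k` from `ℤ/pℤ × K⁺` is a group isomorphism onto the `p`-torsion. -/
theorem p_torsion_of_canonical_lift (K : Type*) [Field K] [IsAlgClosed K]
    (p : ℕ) [CharP K p] (hp : 3 < p)
    (A B : K) (hD : 4 * A ^ 3 + 27 * B ^ 2 ≠ 0)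
    (G : Pt K) (hG : OnCurve A B G)
    (hGne : ¬ ProjEq G ((0, 1, 0) : Pt K))
    (hGtor : ProjEq (pmul A B p G) ((0, 1, 0) : Pt K))
    (hGgen : ∀ P : Pt K, OnCurve A B P → (P.1 ≠ 0 ∨ P.2.1 ≠ 0 ∨ P.2.2 ≠ 0) →
      ProjEq (pmul A B p P) ((0, 1, 0) : Pt K) → ∃ n : ℕ, ProjEq (pmul A B n G) P) :
    let f : ZMod p × K → Pt (DualNumber K) := fun a =>
      padd (ιD A) (ιD B)
        (pmul (ιD A) (ιD B) a.1.val (ιD G.1, ιD G.2.1, ιD G.2.2)) (Oinf a.2)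
    (∀ a, OnCurve (ιD A) (ιD B) (f a) ∧
        ProjEq (pmul (ιD A) (ιD B) p (f a)) ((0, 1, 0) : Pt (DualNumber K))) ∧
    (∀ a b, ProjEq (f a) (f b) → a = b) ∧
    (∀ a b, ProjEq (padd (ιD A) (ιD B) (f a) (f b)) (f (a + b))) ∧
    (∀ P : Pt (DualNumber K), OnCurve (ιD A) (ιD B) P →
      (IsUnit P.1 ∨ IsUnit P.2.1 ∨ IsUnit P.2.2) →
      ProjEq (pmul (ιD A) (ιD B) p P) ((0, 1, 0) : Pt (DualNumber K)) →
      ∃ a, ProjEq (f a) P) := by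
  intro f
  have hp0 : p ≠ 0 := by omega
  have hprime : p.Prime := (CharP.char_is_prime_or_zero K p).resolve_right hp0
  have : NeZero p := ⟨hp0⟩
  have hodd : Odd p := hprime.odd_of_ne_two (by omega)
  have hpK : (p : K) = 0 := CharP.cast_eq_zero K p
  have h2 : (2 : K) ≠ 0 := fun h =>
    absurd (Nat.le_of_dvd two_pos ((CharP.cast_eq_zero_iff K p 2).1 (by exact_mod_cast h)))
      (by omega)
  have hG0 : G ≠ (0, 0, 0) := by
    rintro rfl
    obtain ⟨m, rfl⟩ := Nat.exists_eq_succ_of_ne_zero hp0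
    obtain ⟨u, hu⟩ := hGtor
    simp [pmul_succ, padd] at hu
  obtain ⟨g, hg⟩ := exists_represents h2 hD hG hG0
  have hpg : p • g = 0 := hg.torsion h2 hGtor
  have hg0 : g ≠ 0 := by
    rintro rfl
    exact hGne (hg.projEq represents_origin)
  have horder : addOrderOf g = p := by
    have : Fact p.Prime := ⟨hprime⟩
    exact addOrderOf_eq_prime hpg hg0
  have hN (n : ℕ) : Represents (pmul A B n G) (n • g) := hg.pmul_of_torsion h2 hodd hpg n
  have htor (n : ℕ) : p • n • g = 0 := by rw [smul_comm, hpg, smul_zero]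
  have hY (n : ℕ) : (pmul A B n G).2.1 ≠ 0 := (hN n).Y_ne_zero hodd (htor n)
  have hf (a : ZMod p × K) : f a = translatePt A B a.2 (pmul A B a.1.val G) := by
    rw [translatePt, liftPt, mapPt_pmul]
    rfl
  have hval (n m : ℕ) (h : n % p = m % p) : n • g = m • g := by
    rw [← mod_addOrderOf_nsmul g n, ← mod_addOrderOf_nsmul g m, horder, h]
  refine ⟨fun a => ?_, fun a b h => ?_, fun a b => ?_, fun P hP hP0 hPtor => ?_⟩
  · rw [hf]
    exact ⟨onCurve_translatePt (hN _).onCurve _,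
      pmul_translatePt_char h2 hodd hpK (hN _) (htor _) _⟩
  · rw [hf, hf] at h
    have hred := ((projEq_redPt_translatePt (hY _) _).trans
      (h.mapPt (TrivSqZeroExt.fstHom K K K).toRingHom)).trans
      (projEq_redPt_translatePt (hY _) _).symm
    have hgab := ((hN _).congr hred).unique (hN _)
    have hab : a.1 = b.1 := by
      refine ZMod.val_injective p (nsmul_injOn_Iio_addOrderOf ?_ ?_ hgab) <;>
        simp [horder, ZMod.val_lt]
    rw [hab] at h
    exact Prod.ext hab (translatePt_inj h2 (hN _).onCurve (hY _) h)
  · rw [hf, hf, hf]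
    have hadd := (hN a.1.val).padd_of_torsion h2 hodd (hN b.1.val) (htor _) (htor _)
    have hsum : a.1.val • g + b.1.val • g = (a + b).1.val • g := by
      rw [← add_nsmul]
      exact hval _ _ (by simp [ZMod.val_add])
    refine (translatePt_padd (hN _).onCurve (hN _).onCurve (hY _) (hY _)
      (hadd.Y_ne_zero hodd (by rw [hsum, htor])) _ _).trans ?_
    rw [hsum] at hadd
    exact (hadd.projEq (hN _)).translatePt _
  · have hR : OnCurve A B (redPt P) := by
      simpa [OnCurve, redPt_def, pow_succ, TrivSqZeroExt.fst_mul] using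
        congrArg TrivSqZeroExt.fst hP
    have hR0 : (redPt P).1 ≠ 0 ∨ (redPt P).2.1 ≠ 0 ∨ (redPt P).2.2 ≠ 0 := by
      simpa [TrivSqZeroExt.isUnit_iff_isUnit_fst, redPt_def] using hP0
    have hRtor : ProjEq (pmul A B p (redPt P)) (0, 1, 0) := by
      rw [← redPt_pmul]
      simpa [mapPt, redPt] using hPtor.mapPt (TrivSqZeroExt.fstHom K K K).toRingHom
    obtain ⟨n, hn⟩ := hGgen _ hR hR0 hRtor
    obtain ⟨k, hk⟩ := exists_translatePt h2 hP (((hN n).congr hn).Y_ne_zero hodd (htor n))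
    refine ⟨(n, k), ?_⟩
    rw [hf]
    have hn' : Represents (pmul A B (n : ZMod p).val G) (n • g) := by
      rw [← hval (n : ZMod p).val n (by simp [ZMod.val_natCast])]
      exact hN _
    exact (((hn'.projEq (hN n)).trans hn).translatePt k).trans hk
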